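/- For the curvature tensor R̃ of the metric g̃ on ℝ⁴, at every point the following hold: g̃(R̃(e₁,e₂)e₁,e₂) = −1/4, g̃(R̃(e₁,e₂)e₂,e₃) = 1/4, g̃(R̃(e₁,e₄)e₁,e₄) = −1/4, g̃(R̃(e₁,e₄)e₃,e₄) = 1/4, g̃(R̃(e₂,e₃)e₂,e₃) = −1/4, g̃(R̃(e₂,e₄)e₂,e₄) = 1/2, g̃(R̃(e₃,e₄)e₃,e₄) = 3/4; moreover every component g̃(R̃(eᵢ,eⱼ)eₖ,eₗ) that is not obtained from one of these seven by the curvature symmetries (antisymmetry in the first pair, antisymmetry in the last pair, and symmetry under exchanging the pairs) is zero. -/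

import Mathlib

noncomputable section

/-- The left-invariant frame fields e₁,e₂,e₃,e₄ on ℝ⁴ (coordinates x,y,z,t = p 0,...,p 3). -/
def eVF (i : Fin 4) (p : Fin 4 → ℝ) : Fin 4 → ℝ :=
  ![![1, 0, 0, 0],
    ![p 3, 1, 0, 0],
    ![(p 3) ^ 2 / 2, p 3, 1, 0],
    ![0, 0, 0, 1]] i

/-- The matrix of the metric g̃ at a point with last coordinate t. -/
def gMat (t : ℝ) : Matrix (Fin 4) (Fin 4) ℝ :=
  !![1, -t, t ^ 2 / 2, 0;
     -t, 1 + t ^ 2, -t * (1 + t ^ 2 / 2), 0;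
     t ^ 2 / 2, -t * (1 + t ^ 2 / 2), 1 + t ^ 2 + t ^ 4 / 4, 0;
     0, 0, 0, 1]

/-- The metric g̃ as a bilinear form on each tangent space. -/
def gMet (p X Y : Fin 4 → ℝ) : ℝ :=
  ∑ i, ∑ j, gMat (p 3) i j * X i * Y j

/-- Partial derivative in direction of the i-th coordinate. -/
def pd (i : Fin 4) (f : (Fin 4 → ℝ) → ℝ) (p : Fin 4 → ℝ) : ℝ :=
  deriv (fun s => f (Function.update p i s)) (p i)

/-- The Christoffel symbols Γᵏᵢⱼ of g̃. -/
def Chr (p : Fin 4 → ℝ) (k i j : Fin 4) : ℝ :=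
  (1 / 2) * ∑ l, (gMat (p 3))⁻¹ k l *
    (pd i (fun q => gMat (q 3) j l) p + pd j (fun q => gMat (q 3) i l) p
      - pd l (fun q => gMat (q 3) i j) p)

/-- The Levi-Civita connection of g̃ in coordinates. -/
def nabla (X Y : (Fin 4 → ℝ) → (Fin 4 → ℝ)) (p : Fin 4 → ℝ) : Fin 4 → ℝ :=
  fun k => (∑ i, X p i * pd i (fun q => Y q k) p)
    + ∑ i, ∑ j, Chr p k i j * X p i * Y p j

/-- Lie bracket of vector fields on ℝ⁴. -/
def bracket (X Y : (Fin 4 → ℝ) → (Fin 4 → ℝ)) (p : Fin 4 → ℝ) : Fin 4 → ℝ :=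
  fderiv ℝ Y p (X p) - fderiv ℝ X p (Y p)

/-- The curvature tensor R̃(X,Y)Z = ∇̃_X ∇̃_Y Z − ∇̃_Y ∇̃_X Z − ∇̃_{[X,Y]} Z. -/
def Riem (X Y Z : (Fin 4 → ℝ) → (Fin 4 → ℝ)) (p : Fin 4 → ℝ) : Fin 4 → ℝ :=
  nabla X (nabla Y Z) p - nabla Y (nabla X Z) p - nabla (bracket X Y) Z p

/-- Sign of an ordered index pair: +1 if i<j, −1 if i>j, 0 if i=j. -/
def pairSign (i j : Fin 4) : ℝ :=
  if i < j then 1 else if j < i then -1 else 0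

/-- Index of the unordered pair {i,j} among (0,1),(0,2),(0,3),(1,2),(1,3),(2,3). -/
def pairIdx (i j : Fin 4) : Fin 6 :=
  ![![0, 0, 1, 2], ![0, 0, 3, 4], ![1, 3, 0, 5], ![2, 4, 5, 0]] i j

/-- The matrix of curvature components on pairs: the seven stated values, zero elsewhere. -/
def curvPairMat : Matrix (Fin 6) (Fin 6) ℝ :=
  !![-1/4, 0, 0, 1/4, 0, 0;
     0, 0, 0, 0, 0, 0;
     0, 0, -1/4, 0, 0, 1/4;
     1/4, 0, 0, -1/4, 0, 0;
     0, 0, 0, 0, 1/2, 0;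
     0, 0, 1/4, 0, 0, 3/4]

/-- The full expected curvature tensor in the frame {eᵢ}, generated from the seven
stated components by antisymmetry in the first pair, antisymmetry in the last pair,
and symmetry under exchange of the pairs; all other components are zero. -/
def RExp (i j k l : Fin 4) : ℝ :=
  pairSign i j * pairSign k l * curvPairMat (pairIdx i j) (pairIdx k l)

/-!
The frame `eᵢ` is orthonormal for `g̃`, and its only nonzero brackets are `[e₄, e₂] = e₁` and
`[e₄, e₃] = e₂`, up to antisymmetry. The connection `∇̃` is torsion-free and compatible with `g̃`,
so in an orthonormal frame with constant structure constants its coefficients are given by the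
Koszul formula, and the curvature becomes a quadratic expression in the structure constants. By the
antisymmetry in each pair of indices it has only 36 components to be evaluated.
-/

section Coordinates

open Matrix

variable {p : Fin 4 → ℝ}

theorem pd_eq_fderiv {f : (Fin 4 → ℝ) → ℝ} (hf : DifferentiableAt ℝ f p) (i : Fin 4) :
    pd i f p = fderiv ℝ f p (Pi.single i 1) := by
  have hf' : HasFDerivAt f (fderiv ℝ f p) (Function.update p i (p i)) := by
    simpa using hf.hasFDerivAt
  exact (hf'.comp_hasDerivAt (p i) (hasDerivAt_update p i (p i))).deriv

theorem sum_mul_pd {f : (Fin 4 → ℝ) → ℝ} (hf : DifferentiableAt ℝ f p) (v : Fin 4 → ℝ) :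
    ∑ i, v i * pd i f p = fderiv ℝ f p v := by
  conv_rhs => rw [← Finset.univ_sum_single v, map_sum]
  refine Finset.sum_congr rfl fun i _ => ?_
  rw [pd_eq_fderiv hf, ← smul_eq_mul, ← map_smul, ← Pi.single_smul, smul_eq_mul, mul_one]

theorem isSymm_gMat (t : ℝ) : (gMat t).IsSymm := by
  ext i j
  fin_cases i <;> fin_cases j <;> rfl

theorem det_gMat (t : ℝ) : (gMat t).det = 1 := by
  simp [gMat, det_succ_row_zero, Fin.sum_univ_succ, Fin.succAbove]
  ring

theorem differentiable_gMat (i j : Fin 4) :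
    Differentiable ℝ fun q : Fin 4 → ℝ => gMat (q 3) i j := by
  fin_cases i <;> fin_cases j <;>
    simp only [gMat, of_apply, cons_val', cons_val, Fin.zero_eta, Fin.mk_one, Fin.reduceFinMk] <;>
    fun_prop

theorem gMet_eq_toBilin' (p u v : Fin 4 → ℝ) : gMet p u v = toBilin' (gMat (p 3)) u v := by
  simp only [gMet, toBilin'_apply, mul_comm]

theorem gMet_comm (p u v : Fin 4 → ℝ) : gMet p u v = gMet p v u := by
  simp only [gMet]
  rw [Finset.sum_comm]
  refine Finset.sum_congr rfl fun j _ => Finset.sum_congr rfl fun i _ => ?_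
  rw [(isSymm_gMat (p 3)).apply]
  ring

theorem chr_comm (p : Fin 4 → ℝ) (k i j : Fin 4) : Chr p k i j = Chr p k j i := by
  simp only [Chr, fun q : Fin 4 → ℝ => (isSymm_gMat (q 3)).apply j i, add_comm]

theorem sum_gMat_mul_chr (p : Fin 4 → ℝ) (i j l : Fin 4) :
    ∑ k, gMat (p 3) k l * Chr p k i j =
      (1 / 2) * (pd i (fun q => gMat (q 3) j l) p + pd j (fun q => gMat (q 3) i l) p
        - pd l (fun q => gMat (q 3) i j) p) := by
  set b : Fin 4 → ℝ := fun m => (1 / 2) * (pd i (fun q => gMat (q 3) j m) p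
    + pd j (fun q => gMat (q 3) i m) p - pd m (fun q => gMat (q 3) i j) p) with hb
  have hinv : gMat (p 3) * (gMat (p 3))⁻¹ = 1 := mul_nonsing_inv _ (by simp [det_gMat])
  have hChr : (fun k => Chr p k i j) = (gMat (p 3))⁻¹ *ᵥ b := by
    ext k
    simp only [Chr, mulVec, dotProduct, Finset.mul_sum, hb]
    refine Finset.sum_congr rfl fun m _ => ?_
    ring
  calc ∑ k, gMat (p 3) k l * Chr p k i j = (gMat (p 3) *ᵥ fun k => Chr p k i j) l := by
        simp only [mulVec, dotProduct, (isSymm_gMat (p 3)).apply]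
    _ = b l := by rw [hChr, mulVec_mulVec, hinv, one_mulVec]

/-- The Christoffel symbols at `p`, bundled as the bilinear map `(u, v) ↦ Γ(u, v)`; it is the
zeroth-order part of `nabla`. -/
def christoffel (p : Fin 4 → ℝ) : (Fin 4 → ℝ) →ₗ[ℝ] (Fin 4 → ℝ) →ₗ[ℝ] Fin 4 → ℝ :=
  toLinearMap₂' ℝ (of fun i j k => Chr p k i j)

theorem christoffel_apply (p u v : Fin 4 → ℝ) (k : Fin 4) :
    christoffel p u v k = ∑ i, ∑ j, Chr p k i j * u i * v j := by
  simp only [christoffel, toLinearMap₂'_apply, Finset.sum_apply, Pi.smul_apply, of_apply,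
    smul_eq_mul]
  congr! 2
  ring

theorem christoffel_comm (p u v : Fin 4 → ℝ) : christoffel p u v = christoffel p v u := by
  ext k
  rw [christoffel_apply, christoffel_apply, Finset.sum_comm]
  congr! 2 with i _ j
  rw [chr_comm]; ring

theorem nabla_eq (X : (Fin 4 → ℝ) → Fin 4 → ℝ) {Y : (Fin 4 → ℝ) → Fin 4 → ℝ}
    (hY : DifferentiableAt ℝ Y p) :
    nabla X Y p = fderiv ℝ Y p (X p) + christoffel p (X p) (Y p) := by
  ext k
  have hYk : DifferentiableAt ℝ (fun q => Y q k) p := differentiableAt_pi.1 hY k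
  simp [nabla, christoffel_apply, sum_mul_pd hYk, fderiv_apply hY]

/-- The directional derivative `(D_u g̃)(v, w)` of the coefficients of the metric at `p`, with the
components of `v` and `w` held constant. -/
def metricDeriv (p u v w : Fin 4 → ℝ) : ℝ :=
  ∑ i, ∑ j, ∑ l, pd i (fun q => gMat (q 3) j l) p * u i * v j * w l

theorem metricDeriv_comm (p u v w : Fin 4 → ℝ) : metricDeriv p u v w = metricDeriv p u w v := by
  simp only [metricDeriv]
  refine Finset.sum_congr rfl fun i _ => ?_
  rw [Finset.sum_comm]
  refine Finset.sum_congr rfl fun l _ => Finset.sum_congr rfl fun j _ => ?_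
  simp only [fun q : Fin 4 → ℝ => (isSymm_gMat (q 3)).apply j l]
  ring

theorem two_mul_gMet_christoffel (p u v w : Fin 4 → ℝ) :
    2 * gMet p (christoffel p u v) w =
      metricDeriv p u v w + metricDeriv p v u w - metricDeriv p w u v := by
  have hswap : metricDeriv p v u w =
      ∑ i, ∑ j, ∑ l, pd j (fun q => gMat (q 3) i l) p * u i * v j * w l := by
    rw [metricDeriv, Finset.sum_comm]
    refine Finset.sum_congr rfl fun i _ => Finset.sum_congr rfl fun j _ =>
      Finset.sum_congr rfl fun l _ => ?_
    ring
  have hcycle : metricDeriv p w u v =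
      ∑ i, ∑ j, ∑ l, pd l (fun q => gMat (q 3) i j) p * u i * v j * w l := by
    rw [metricDeriv, ← Finset.sum_comm_cycle]
    refine Finset.sum_congr rfl fun i _ => Finset.sum_congr rfl fun j _ =>
      Finset.sum_congr rfl fun l _ => ?_
    ring
  have hΓ : gMet p (christoffel p u v) w =
      ∑ i, ∑ j, ∑ l, (∑ k, gMat (p 3) k l * Chr p k i j) * u i * v j * w l := by
    simp only [gMet, christoffel_apply, Finset.mul_sum, Finset.sum_mul]
    rw [Finset.sum_comm_cycle]
    refine Finset.sum_congr rfl fun i _ => ?_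
    rw [Finset.sum_comm_cycle]
    refine Finset.sum_congr rfl fun j _ => ?_
    rw [Finset.sum_comm]
    refine Finset.sum_congr rfl fun l _ => Finset.sum_congr rfl fun k _ => ?_
    ring
  rw [hΓ, hswap, hcycle, metricDeriv]
  simp only [sum_gMat_mul_chr, ← Finset.sum_add_distrib, ← Finset.sum_sub_distrib, Finset.mul_sum]
  congr! 3
  ring

theorem fderiv_gMet {Y Z : (Fin 4 → ℝ) → Fin 4 → ℝ} (hY : DifferentiableAt ℝ Y p)
    (hZ : DifferentiableAt ℝ Z p) (u : Fin 4 → ℝ) :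
    fderiv ℝ (fun q => gMet q (Y q) (Z q)) p u =
      metricDeriv p u (Y p) (Z p) + gMet p (fderiv ℝ Y p u) (Z p)
        + gMet p (Y p) (fderiv ℝ Z p u) := by
  have hg := fun i j => (differentiable_gMat i j p).hasFDerivAt
  have hproduct := HasFDerivAt.fun_sum (u := Finset.univ) fun i _ =>
    HasFDerivAt.fun_sum (u := Finset.univ) fun j _ =>
      ((hg i j).mul (hasFDerivAt_pi'.1 hY.hasFDerivAt i)).mul
        (hasFDerivAt_pi'.1 hZ.hasFDerivAt j)
  have hmetricDeriv : metricDeriv p u (Y p) (Z p) =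
      ∑ i, ∑ j, fderiv ℝ (fun q => gMat (q 3) i j) p u * Y p i * Z p j := by
    simp only [metricDeriv, ← sum_mul_pd (differentiable_gMat _ _ _), Finset.sum_mul]
    rw [← Finset.sum_comm_cycle]
    refine Finset.sum_congr rfl fun j _ => Finset.sum_congr rfl fun l _ =>
      Finset.sum_congr rfl fun i _ => ?_
    ring
  refine (DFunLike.congr_fun hproduct.fderiv u).trans ?_
  simp only [gMet, hmetricDeriv, ← Finset.sum_add_distrib, _root_.sum_apply]
  refine Finset.sum_congr rfl fun i _ => Finset.sum_congr rfl fun j _ => ?_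
  simp only [_root_.add_apply, _root_.smul_apply, Pi.mul_apply, ContinuousLinearMap.comp_apply,
    ContinuousLinearMap.proj_apply, smul_eq_mul]
  ring

theorem gMet_nabla_add_gMet_nabla (X : (Fin 4 → ℝ) → Fin 4 → ℝ) {Y Z : (Fin 4 → ℝ) → Fin 4 → ℝ}
    (hY : DifferentiableAt ℝ Y p) (hZ : DifferentiableAt ℝ Z p) :
    gMet p (nabla X Y p) (Z p) + gMet p (Y p) (nabla X Z p) =
      fderiv ℝ (fun q => gMet q (Y q) (Z q)) p (X p) := by
  have hΓ : gMet p (christoffel p (X p) (Y p)) (Z p) + gMet p (Y p) (christoffel p (X p) (Z p)) =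
      metricDeriv p (X p) (Y p) (Z p) := by
    rw [gMet_comm p (Y p)]
    linear_combination (two_mul_gMet_christoffel p (X p) (Y p) (Z p)
      + two_mul_gMet_christoffel p (X p) (Z p) (Y p) + metricDeriv_comm p (X p) (Z p) (Y p)) / 2
  rw [fderiv_gMet hY hZ, nabla_eq X hY, nabla_eq X hZ, ← hΓ]
  simp only [gMet_eq_toBilin', map_add, LinearMap.add_apply]
  ring

theorem nabla_sub_nabla {X Y : (Fin 4 → ℝ) → Fin 4 → ℝ} (hX : DifferentiableAt ℝ X p)
    (hY : DifferentiableAt ℝ Y p) : nabla X Y p - nabla Y X p = bracket X Y p := by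
  rw [nabla_eq X hY, nabla_eq Y hX, christoffel_comm p (Y p), add_sub_add_right_eq_sub, bracket]

end Coordinates

section Koszul

variable {ι 𝕜 : Type*} [Field 𝕜]

/-- The Koszul formula: the coefficient `⟨∇_{E i} E j, E k⟩` of the Levi-Civita connection in an
orthonormal frame `E` with constant structure constants `c`, where `c i j k` is the `E k`-component
of `[E i, E j]`. -/
def koszulCoeff (c : ι → ι → ι → 𝕜) (i j k : ι) : 𝕜 :=
  (c i j k - c j k i + c k i j) / 2

theorem eq_koszulCoeff [NeZero (2 : 𝕜)] {c ω : ι → ι → ι → 𝕜} (hω : ∀ i j k, ω i j k = -ω i k j)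
    (hc : ∀ i j k, c i j k = ω i j k - ω j i k) (i j k : ι) : ω i j k = koszulCoeff c i j k := by
  rw [koszulCoeff, hc, hc, hc, eq_div_iff two_ne_zero]
  linear_combination hω i j k - hω k i j + hω j i k

theorem koszulCoeff_swap_right {c : ι → ι → ι → 𝕜} (hc : ∀ i j k, c i j k = -c j i k)
    (i j k : ι) : koszulCoeff c i j k = -koszulCoeff c i k j := by
  rw [koszulCoeff, koszulCoeff, hc i k j, hc k j i, hc j i k]
  ring

variable [Fintype ι]

/-- The curvature component `⟨R(E i, E j) E k, E l⟩` in an orthonormal frame `E` with constant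
structure constants `c`, for the convention `R(X, Y) = [∇_X, ∇_Y] - ∇_[X, Y]`. -/
def frameCurvature (c : ι → ι → ι → 𝕜) (i j k l : ι) : 𝕜 :=
  ∑ m, (koszulCoeff c j k m * koszulCoeff c i m l - koszulCoeff c i k m * koszulCoeff c j m l
    - c i j m * koszulCoeff c m k l)

variable {c : ι → ι → ι → 𝕜} (hc : ∀ i j k, c i j k = -c j i k)
include hc

theorem frameCurvature_swap_left (i j k l : ι) :
    frameCurvature c i j k l = -frameCurvature c j i k l := by
  simp only [frameCurvature, ← Finset.sum_neg_distrib, hc i j]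
  refine Finset.sum_congr rfl fun m _ => ?_
  ring

theorem frameCurvature_swap_right (i j k l : ι) :
    frameCurvature c i j k l = -frameCurvature c i j l k := by
  simp only [frameCurvature, ← Finset.sum_neg_distrib]
  refine Finset.sum_congr rfl fun m _ => ?_
  have h := koszulCoeff_swap_right hc
  rw [h i m l, h j m l, h m k l, h j k m, h i k m]
  ring

end Koszul

theorem eq_of_antisymm_of_lt {ι R : Type*} [LinearOrder ι] [AddGroup R] [IsAddTorsionFree R]
    {f g : ι → ι → R} (hf : ∀ i j, f i j = -f j i) (hg : ∀ i j, g i j = -g j i)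
    (h : ∀ i j, i < j → f i j = g i j) (i j : ι) : f i j = g i j := by
  rcases lt_trichotomy i j with hij | rfl | hij
  · exact h i j hij
  · rw [self_eq_neg.1 (hf i i), self_eq_neg.1 (hg i i)]
  · rw [hf, hg, h j i hij]

section Frame

variable {ι : Type*} [Fintype ι] {p : Fin 4 → ℝ}

theorem nabla_sum_smul (X : (Fin 4 → ℝ) → Fin 4 → ℝ) {E : ι → (Fin 4 → ℝ) → Fin 4 → ℝ}
    (hE : ∀ m, DifferentiableAt ℝ (E m) p) (a : ι → ℝ) :
    nabla X (fun q => ∑ m, a m • E m q) p = ∑ m, a m • nabla X (E m) p := by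
  have hd : HasFDerivAt (fun q => ∑ m, a m • E m q) (∑ m, a m • fderiv ℝ (E m) p) p :=
    HasFDerivAt.fun_sum fun m _ => (hE m).hasFDerivAt.const_smul (a m)
  simp [nabla_eq X hd.differentiableAt, hd.fderiv, nabla_eq X (hE _), Finset.sum_add_distrib]

theorem nabla_eq_sum_smul {X Z : (Fin 4 → ℝ) → Fin 4 → ℝ} {E : ι → (Fin 4 → ℝ) → Fin 4 → ℝ}
    (hZ : DifferentiableAt ℝ Z p) {a : ι → ℝ} (hX : X p = ∑ m, a m • E m p) :
    nabla X Z p = ∑ m, a m • nabla (E m) Z p := by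
  simp [nabla_eq _ hZ, hX, Finset.sum_add_distrib]

/-- `E` is a `g̃`-orthonormal frame of differentiable vector fields spanning a Lie algebra with
structure constants `c`, where `c i j m` is the `E m`-component of `[E i, E j]`. -/
structure IsOrthonormalLieFrame (c : Fin 4 → Fin 4 → Fin 4 → ℝ)
    (E : Fin 4 → (Fin 4 → ℝ) → Fin 4 → ℝ) : Prop where
  differentiable (i : Fin 4) : Differentiable ℝ (E i)
  orthonormal (p : Fin 4 → ℝ) (i j : Fin 4) : gMet p (E i p) (E j p) = if i = j then 1 else 0
  bracket_eq (i j : Fin 4) (p : Fin 4 → ℝ) : bracket (E i) (E j) p = ∑ m, c i j m • E m p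

namespace IsOrthonormalLieFrame

variable {c : Fin 4 → Fin 4 → Fin 4 → ℝ} {E : Fin 4 → (Fin 4 → ℝ) → Fin 4 → ℝ}
  (hE : IsOrthonormalLieFrame c E)
include hE

theorem gMet_sum_smul (p : Fin 4 → ℝ) (a : Fin 4 → ℝ) (l : Fin 4) :
    gMet p (∑ m, a m • E m p) (E l p) = a l := by
  have h := hE.orthonormal p
  simp only [gMet_eq_toBilin'] at h ⊢
  simp [h]

theorem sum_gMet_smul (p v : Fin 4 → ℝ) : ∑ m, gMet p v (E m p) • E m p = v := by
  have hli : LinearIndependent ℝ fun m => E m p := by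
    rw [Fintype.linearIndependent_iff]
    intro a ha l
    rw [← hE.gMet_sum_smul p a l, ha, gMet_eq_toBilin', map_zero, LinearMap.zero_apply]
  obtain ⟨a, rfl⟩ : ∃ a : Fin 4 → ℝ, ∑ m, a m • E m p = v := by
    have hspan := hli.span_eq_top_of_card_eq_finrank (by simp)
    rw [← Submodule.mem_span_range_iff_exists_fun, hspan]
    exact Submodule.mem_top
  simp only [hE.gMet_sum_smul]

theorem nabla_eq (i j : Fin 4) (p : Fin 4 → ℝ) :
    nabla (E i) (E j) p = ∑ k, koszulCoeff c i j k • E k p := by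
  have hd : ∀ i, DifferentiableAt ℝ (E i) p := fun i => hE.differentiable i p
  have hmetric : ∀ i j k, gMet p (nabla (E i) (E j) p) (E k p) =
      -gMet p (nabla (E i) (E k) p) (E j p) := by
    intro i j k
    have h := gMet_nabla_add_gMet_nabla (E i) (hd j) (hd k)
    simp only [hE.orthonormal, fderiv_fun_const, Pi.zero_apply, _root_.zero_apply] at h
    rw [gMet_comm p (nabla (E i) (E k) p)]
    linarith
  have htorsion : ∀ i j k, c i j k =
      gMet p (nabla (E i) (E j) p) (E k p) - gMet p (nabla (E j) (E i) p) (E k p) := by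
    intro i j k
    rw [← hE.gMet_sum_smul p (c i j), ← hE.bracket_eq, ← nabla_sub_nabla (hd i) (hd j)]
    simp only [gMet_eq_toBilin', map_sub, LinearMap.sub_apply]
  rw [← hE.sum_gMet_smul p (nabla (E i) (E j) p)]
  simp only [eq_koszulCoeff hmetric htorsion]

theorem riem_eq (i j k : Fin 4) (p : Fin 4 → ℝ) :
    Riem (E i) (E j) (E k) p = ∑ l, frameCurvature c i j k l • E l p := by
  have hd : ∀ i, DifferentiableAt ℝ (E i) p := fun i => hE.differentiable i p
  have hnabla : ∀ i j k, nabla (E i) (nabla (E j) (E k)) p =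
      ∑ l, (∑ m, koszulCoeff c j k m * koszulCoeff c i m l) • E l p := by
    intro i j k
    rw [funext (hE.nabla_eq j k), nabla_sum_smul _ hd]
    simp only [hE.nabla_eq, Finset.smul_sum, Finset.sum_smul, mul_smul]
    rw [Finset.sum_comm]
  have hbracket : nabla (bracket (E i) (E j)) (E k) p =
      ∑ l, (∑ m, c i j m * koszulCoeff c m k l) • E l p := by
    rw [nabla_eq_sum_smul (hd k) (hE.bracket_eq i j p)]
    simp only [hE.nabla_eq, Finset.smul_sum, Finset.sum_smul, mul_smul]
    rw [Finset.sum_comm]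
  simp only [Riem, hnabla, hbracket, frameCurvature, Finset.sum_sub_distrib, sub_smul]

theorem gMet_riem (i j k l : Fin 4) (p : Fin 4 → ℝ) :
    gMet p (Riem (E i) (E j) (E k) p) (E l p) = frameCurvature c i j k l := by
  rw [hE.riem_eq, hE.gMet_sum_smul]

end IsOrthonormalLieFrame

end Frame

section Nil

/-- The matrix of `ad e₄`: the row `j` holds the components of `[e₄, eⱼ]`, so that `[e₄, e₂] = e₁`
and `[e₄, e₃] = e₂`. -/
def nilAd : Matrix (Fin 4) (Fin 4) ℝ :=
  !![0, 0, 0, 0; 1, 0, 0, 0; 0, 1, 0, 0; 0, 0, 0, 0]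

/-- The structure constants of the frame `eVF`: `nilStructConst i j k` is the `eₖ`-component of
`[eᵢ, eⱼ]`. The span of `e₁`, `e₂`, `e₃` being abelian, `nilAd` determines all of them. -/
def nilStructConst (i j k : Fin 4) : ℝ :=
  (if i = 3 then nilAd j k else 0) - if j = 3 then nilAd i k else 0

theorem nilStructConst_swap (i j k : Fin 4) : nilStructConst i j k = -nilStructConst j i k :=
  (neg_sub _ _).symm

theorem gMet_eVF (p : Fin 4 → ℝ) (i j : Fin 4) :
    gMet p (eVF i p) (eVF j p) = if i = j then 1 else 0 := by
  fin_cases i <;> fin_cases j <;> simp [gMet, gMat, eVF, Fin.sum_univ_four] <;> ring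

theorem hasFDerivAt_eVF (j : Fin 4) (p : Fin 4 → ℝ) :
    HasFDerivAt (eVF j)
      ((ContinuousLinearMap.proj 3 : (Fin 4 → ℝ) →L[ℝ] ℝ).smulRight (∑ m, nilAd j m • eVF m p))
      p := by
  have hconst (a : ℝ) := hasFDerivAt_const (𝕜 := ℝ) a p
  have ht := hasFDerivAt_apply (𝕜 := ℝ) (3 : Fin 4) p
  have hsq : HasDerivAt (fun t : ℝ => t ^ 2 / 2) (p 3) (p 3) := by
    simpa using (hasDerivAt_pow 2 (p 3)).div_const 2
  rw [hasFDerivAt_pi']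
  intro k
  fin_cases j <;> fin_cases k <;>
    first
    | refine (hconst _).congr_fderiv ?_
    | refine ht.congr_fderiv ?_
    | refine (hsq.comp_hasFDerivAt p ht).congr_fderiv ?_
  all_goals
    ext v
    simp [nilAd, eVF, Fin.sum_univ_four, mul_comm]

theorem eVF_apply_three (i : Fin 4) (p : Fin 4 → ℝ) : eVF i p 3 = if i = 3 then 1 else 0 := by
  fin_cases i <;> rfl

theorem isOrthonormalLieFrame_eVF : IsOrthonormalLieFrame nilStructConst eVF where
  differentiable i p := (hasFDerivAt_eVF i p).differentiableAt
  orthonormal := gMet_eVF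
  bracket_eq i j p := by
    simp [bracket, (hasFDerivAt_eVF _ p).fderiv, eVF_apply_three, nilStructConst, sub_smul,
      ite_smul, Finset.sum_sub_distrib]

theorem pairSign_swap (i j : Fin 4) : pairSign i j = -pairSign j i := by
  rcases lt_trichotomy i j with h | rfl | h <;> simp [pairSign, *, not_lt_of_gt]

theorem pairIdx_comm : ∀ i j, pairIdx i j = pairIdx j i := by
  decide

theorem rExp_swap_left (i j k l : Fin 4) : RExp i j k l = -RExp j i k l := by
  rw [RExp, RExp, pairSign_swap, pairIdx_comm]; ring

theorem rExp_swap_right (i j k l : Fin 4) : RExp i j k l = -RExp i j l k := by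
  rw [RExp, RExp, pairSign_swap k, pairIdx_comm k]; ring

/-- The values of the connection coefficients: the matrix `nilConnection i` has the entries
`⟨∇_{eᵢ} eⱼ, eₖ⟩`. -/
def nilConnection : Fin 4 → Matrix (Fin 4) (Fin 4) ℝ :=
  ![!![0, 0, 0, 0; 0, 0, 0, 1/2; 0, 0, 0, 0; 0, -1/2, 0, 0],
    !![0, 0, 0, 1/2; 0, 0, 0, 0; 0, 0, 0, 1/2; -1/2, 0, -1/2, 0],
    !![0, 0, 0, 0; 0, 0, 0, 1/2; 0, 0, 0, 0; 0, -1/2, 0, 0],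
    !![0, -1/2, 0, 0; 1/2, 0, -1/2, 0; 0, 1/2, 0, 0; 0, 0, 0, 0]]

theorem koszulCoeff_nilStructConst (i j k : Fin 4) :
    koszulCoeff nilStructConst i j k = nilConnection i j k := by
  fin_cases i <;> fin_cases j <;> fin_cases k <;>
    simp [koszulCoeff, nilStructConst, nilAd, nilConnection]

theorem frameCurvature_nilStructConst_of_lt {i j k l : Fin 4} (hij : i < j) (hkl : k < l) :
    frameCurvature nilStructConst i j k l = RExp i j k l := by
  simp only [frameCurvature, koszulCoeff_nilStructConst, Fin.sum_univ_four]
  fin_cases i <;> fin_cases j <;> (try contradiction) <;>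
    fin_cases k <;> fin_cases l <;> (try contradiction) <;>
      simp [nilConnection, nilStructConst, nilAd, RExp, pairSign, pairIdx, curvPairMat] <;> norm_num

theorem frameCurvature_nilStructConst (i j k l : Fin 4) :
    frameCurvature nilStructConst i j k l = RExp i j k l := by
  have hright (i j : Fin 4) (hij : i < j) : frameCurvature nilStructConst i j k l = RExp i j k l :=
    eq_of_antisymm_of_lt (frameCurvature_swap_right nilStructConst_swap i j) (rExp_swap_right i j)
      (fun _ _ => frameCurvature_nilStructConst_of_lt hij) k l
  exact eq_of_antisymm_of_lt (f := fun i j => frameCurvature nilStructConst i j k l)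
    (g := fun i j => RExp i j k l)
    (fun i j => frameCurvature_swap_left nilStructConst_swap i j k l)
    (fun i j => rExp_swap_left i j k l) hright i j

end Nil

/-- The components of the curvature tensor of g̃ in the frame {eᵢ}: the seven stated
components hold, and every component not obtained from them by the curvature
symmetries vanishes. -/
theorem nil4_curvature_components :
    ∀ (p : Fin 4 → ℝ) (i j k l : Fin 4),
      gMet p (Riem (eVF i) (eVF j) (eVF k) p) (eVF l p) = RExp i j k l := by
  intro p i j k l
  rw [isOrthonormalLieFrame_eVF.gMet_riem, frameCurvature_nilStructConst]
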